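/- Comparison criterion for transience: let X be a countable set and p, p′ : X × X → [0,1] two Markov transition kernels (∑_y p(x,y) = 1 and ∑_y p′(x,y) = 1 for every x ∈ X). Assume (i) there is a function m : X → (0,∞) that is stationary for both kernels, i.e. ∑_x m(x)p(x,y) = m(y) and ∑_x m(x)p′(x,y) = m(y) for all y; (ii) p is reversible with respect to m, i.e. m(x)p(x,y) = m(y)p(y,x) for all x, y; (iii) there is ε > 0 with p′(x,y) ≥ ε·p(x,y) for all x, y. Define the n-step kernels by p^{(0)}(x,y) = 1 if x = y and 0 otherwise, and p^{(n+1)}(x,y) = ∑_z p(x,z)p^{(n)}(z,y), and similarly for p′. Then for every o ∈ X one has ∑_{n=0}^∞ p′^{(n)}(o,o) ≤ (1/ε)·∑_{n=0}^∞ p^{(n)}(o,o) (as elements of [0,∞]); in particular, if ∑_{n=0}^∞ p^{(n)}(o,o) < ∞ (p is transient) then ∑_{n=0}^∞ p′^{(n)}(o,o) < ∞ (p′ is transient). -/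

import Mathlib

open scoped ENNReal

noncomputable section

open Classical in
/-- The `n`-step transition kernel of a Markov kernel `p` on a countable state space:
`iterKernel p 0 = identity kernel`, `iterKernel p (n+1) x y = ∑ z, p x z * iterKernel p n z y`. -/
def iterKernel {X : Type*} (p : X → X → ℝ≥0∞) : ℕ → X → X → ℝ≥0∞
  | 0 => fun x y => if x = y then 1 else 0
  | n + 1 => fun x y => ∑' z, p x z * iterKernel p n z y

namespace TC

lemma two_mul_le (a b : ℝ≥0∞) : 2 * (a * b) ≤ a * a + b * b := by
  have key : ∀ a b : ℝ≥0∞, a ≤ b → 2 * (a * b) ≤ a * a + b * b := by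
    intro a b h
    obtain ⟨c, rfl⟩ := exists_add_of_le h
    calc 2 * (a * (a + c)) ≤ 2 * (a * (a + c)) + c * c := le_self_add
      _ = _ := by ring
  rcases le_total a b with h | h
  · exact key a b h
  · have := key b a h
    rwa [mul_comm b a, add_comm] at this

variable {X : Type*}

/-- weighted inner product -/
def B (m f g : X → ℝ≥0∞) : ℝ≥0∞ := ∑' x, m x * (f x * g x)

/-- bilinear form of a kernel -/
def D (m : X → ℝ≥0∞) (K : X → X → ℝ≥0∞) (f g : X → ℝ≥0∞) : ℝ≥0∞ :=
  ∑' x, ∑' y, m x * K x y * (f x * g y)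

lemma D_eq (m : X → ℝ≥0∞) (K : X → X → ℝ≥0∞) (f g : X → ℝ≥0∞) :
    D m K f g = B m f (fun x => ∑' y, K x y * g y) := by
  unfold D B
  refine tsum_congr fun x => ?_
  rw [← ENNReal.tsum_mul_left, ← ENNReal.tsum_mul_left]
  exact tsum_congr fun y => by ring

lemma sum_row (m : X → ℝ≥0∞) (K : X → X → ℝ≥0∞) (c : ℝ≥0∞) (h : ∀ x, ∑' y, K x y = c)
    (f g : X → ℝ≥0∞) : ∑' x, ∑' y, m x * K x y * (f x * g x) = c * B m f g := by
  unfold B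
  rw [← ENNReal.tsum_mul_left]
  refine tsum_congr fun x => ?_
  rw [ENNReal.tsum_mul_right, ENNReal.tsum_mul_left, h]
  ring

lemma sum_col (m : X → ℝ≥0∞) (K : X → X → ℝ≥0∞) (c : ℝ≥0∞) (h : ∀ y, ∑' x, m x * K x y = c * m y)
    (f g : X → ℝ≥0∞) : ∑' x, ∑' y, m x * K x y * (f y * g y) = c * B m f g := by
  unfold B
  rw [ENNReal.tsum_comm, ← ENNReal.tsum_mul_left]
  refine tsum_congr fun x => ?_
  rw [ENNReal.tsum_mul_right, h]
  ring

lemma D_le (m : X → ℝ≥0∞) (K : X → X → ℝ≥0∞) (c : ℝ≥0∞) (hr : ∀ x, ∑' y, K x y = c)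
    (hc : ∀ y, ∑' x, m x * K x y = c * m y) (f g : X → ℝ≥0∞) :
    2 * D m K f g ≤ c * B m f f + c * B m g g := by
  rw [← sum_row m K c hr f f, ← sum_col m K c hc g g, ← ENNReal.tsum_add]
  simp_rw [← ENNReal.tsum_add]
  unfold D
  simp_rw [← ENNReal.tsum_mul_left]
  refine ENNReal.tsum_le_tsum fun x => ENNReal.tsum_le_tsum fun y => ?_
  calc _ = m x * K x y * (2 * (f x * g y)) := by ring
    _ ≤ m x * K x y * (f x * f x + g y * g y) := by gcongr; exact two_mul_le _ _
    _ = _ := by ring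

lemma D_symm (m : X → ℝ≥0∞) (K : X → X → ℝ≥0∞) (hrev : ∀ x y, m x * K x y = m y * K y x)
    (f g : X → ℝ≥0∞) : D m K f g = D m K g f := by
  unfold D
  rw [ENNReal.tsum_comm]
  refine tsum_congr fun x => tsum_congr fun y => ?_
  rw [hrev, mul_comm (f y)]

lemma form_nonneg (m : X → ℝ≥0∞) (K : X → X → ℝ≥0∞) (hr : ∀ x, ∑' y, K x y = 1)
    (hc : ∀ y, ∑' x, m x * K x y = 1 * m y) (hrev : ∀ x y, m x * K x y = m y * K y x)
    (f v : X → ℝ≥0∞) :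
    2 * D m K f f + 2 * D m K v v + 4 * B m f v ≤ 2 * B m f f + 2 * B m v v + 4 * D m K f v := by
  have key : ∑' x, ∑' y, m x * K x y * (2 * ((f x + v y) * (f y + v x))) ≤
      ∑' x, ∑' y, m x * K x y *
        ((f x + v y) * (f x + v y) + (f y + v x) * (f y + v x)) := by
    refine ENNReal.tsum_le_tsum fun x => ENNReal.tsum_le_tsum fun y => ?_
    gcongr
    exact two_mul_le _ _
  have e1 : ∑' x, ∑' y, m x * K x y * (2 * ((f x + v y) * (f y + v x))) =
      2 * D m K f f + 2 * D m K v v + 4 * B m f v := by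
    have h : ∀ x y, m x * K x y * (2 * ((f x + v y) * (f y + v x))) =
        2 * (m x * K x y * (f x * f y)) + 2 * (m x * K x y * (v x * v y)) +
        (2 * (m x * K x y * (f x * v x)) + 2 * (m x * K x y * (f y * v y))) := by
      intro x y; ring
    simp_rw [h, ENNReal.tsum_add, ENNReal.tsum_mul_left]
    rw [sum_row m K 1 hr f v, sum_col m K 1 hc f v]
    unfold D
    ring
  have e2 : ∑' x, ∑' y, m x * K x y *
        ((f x + v y) * (f x + v y) + (f y + v x) * (f y + v x)) =
      2 * B m f f + 2 * B m v v + 4 * D m K f v := by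
    have h : ∀ x y, m x * K x y * ((f x + v y) * (f x + v y) + (f y + v x) * (f y + v x)) =
        m x * K x y * (f x * f x) + m x * K x y * (f y * f y) +
        (m x * K x y * (v x * v x) + m x * K x y * (v y * v y)) +
        (2 * (m x * K x y * (f x * v y)) + 2 * (m x * K x y * (v x * f y))) := by
      intro x y; ring
    simp_rw [h, ENNReal.tsum_add, ENNReal.tsum_mul_left]
    rw [sum_row m K 1 hr f f, sum_col m K 1 hc f f, sum_row m K 1 hr v v, sum_col m K 1 hc v v]
    have := D_symm m K hrev v f
    change _ + (2 * D m K f v + 2 * D m K v f) = _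
    rw [this]
    ring
  rwa [e1, e2] at key

/-- partial Green function toward `o` -/
def u (p : X → X → ℝ≥0∞) (o : X) (N : ℕ) (x : X) : ℝ≥0∞ :=
  ∑ n ∈ Finset.range N, iterKernel p n x o

/-- n-step kernel toward `o` -/
def w (p : X → X → ℝ≥0∞) (o : X) (n : ℕ) (x : X) : ℝ≥0∞ := iterKernel p n x o

lemma w_succ (p : X → X → ℝ≥0∞) (o : X) (n : ℕ) :
    w p o (n + 1) = fun x => ∑' y, p x y * w p o n y := rfl

lemma u_succ (p : X → X → ℝ≥0∞) (o : X) (N : ℕ) (x : X) :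
    u p o (N + 1) x = u p o N x + w p o N x := Finset.sum_range_succ _ _

lemma u_id (p : X → X → ℝ≥0∞) (o : X) (N : ℕ) (x : X) :
    u p o N x + w p o N x = (∑' y, p x y * u p o N y) + w p o 0 x := by
  induction N with
  | zero => simp [u]
  | succ N ih =>
    rw [u_succ, ih]
    simp_rw [u_succ, mul_add, ENNReal.tsum_add]
    rw [w_succ]
    ring

lemma B_add (m f g h : X → ℝ≥0∞) : B m f (fun x => g x + h x) = B m f g + B m f h := by
  unfold B
  rw [← ENNReal.tsum_add]
  exact tsum_congr fun x => by ring

lemma B_comm (m f g : X → ℝ≥0∞) : B m f g = B m g f :=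
  tsum_congr fun x => by rw [mul_comm (f x)]

lemma B_delta (m f : X → ℝ≥0∞) (p : X → X → ℝ≥0∞) (o : X) : B m f (w p o 0) = m o * f o := by
  unfold B
  rw [tsum_eq_single o]
  · simp [w, iterKernel]
  · intro x hx
    simp [w, iterKernel, hx]

lemma B_u (m f : X → ℝ≥0∞) (p : X → X → ℝ≥0∞) (o : X) (N : ℕ) :
    B m f (u p o N) + B m f (w p o N) = D m p f (u p o N) + m o * f o := by
  rw [D_eq, ← B_delta m f p o, ← B_add, ← B_add]
  congr 1
  funext x
  exact u_id p o N x

lemma B_w (m : X → ℝ≥0∞) (p : X → X → ℝ≥0∞) (hrev : ∀ x y, m x * p x y = m y * p y x) (o : X)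
    (a b : ℕ) : B m (w p o a) (w p o b) = m o * w p o (a + b) o := by
  induction a generalizing b with
  | zero => rw [B_comm, B_delta, zero_add]
  | succ a ih =>
    have : B m (w p o (a + 1)) (w p o b) = B m (w p o a) (w p o (b + 1)) := by
      rw [B_comm, w_succ, w_succ, ← D_eq, ← D_eq, D_symm m p hrev]
    rw [this, ih]
    congr 2
    omega

lemma w_le (p : X → X → ℝ≥0∞) (hr : ∀ x, ∑' y, p x y = 1) (o : X) (n : ℕ) (x : X) :
    w p o n x ≤ 1 := by
  induction n generalizing x with
  | zero => simp only [w, iterKernel]; split_ifs <;> simp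
  | succ n ih =>
    rw [w_succ, ← hr x]
    refine ENNReal.tsum_le_tsum fun y => ?_
    calc _ ≤ p x y * 1 := by gcongr; exact ih y
      _ = _ := mul_one _

lemma w_sum (m : X → ℝ≥0∞) (p : X → X → ℝ≥0∞) (hc : ∀ y, ∑' x, m x * p x y = m y) (o : X)
    (n : ℕ) : ∑' x, m x * w p o n x = m o := by
  induction n with
  | zero =>
    rw [tsum_eq_single o]
    · simp [w, iterKernel]
    · intro x hx
      simp [w, iterKernel, hx]
  | succ n ih =>
    simp_rw [w_succ, ← ENNReal.tsum_mul_left]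
    rw [ENNReal.tsum_comm]
    simp_rw [← mul_assoc, ENNReal.tsum_mul_right, hc]
    exact ih

lemma B_fin (m : X → ℝ≥0∞) (hm : ∀ x, m x < ⊤) (p : X → X → ℝ≥0∞) (hr : ∀ x, ∑' y, p x y = 1)
    (hc : ∀ y, ∑' x, m x * p x y = m y) (o : X) (N : ℕ) : B m (u p o N) (u p o N) ≠ ⊤ := by
  have h1 : ∀ x, u p o N x ≤ N := by
    intro x
    calc u p o N x ≤ ∑ n ∈ Finset.range N, (1 : ℝ≥0∞) :=
          Finset.sum_le_sum fun n _ => w_le p hr o n x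
      _ = N := by simp
  have h2 : ∑' x, m x * u p o N x = N * m o := by
    induction N with
    | zero => simp [u]
    | succ N ih =>
      simp_rw [u_succ, mul_add, ENNReal.tsum_add]
      rw [w_sum m p hc, ih]
      · push_cast; ring
      · intro x
        calc u p o N x ≤ ∑ n ∈ Finset.range N, (1 : ℝ≥0∞) :=
              Finset.sum_le_sum fun n _ => w_le p hr o n x
          _ = N := by simp
  refine ne_top_of_le_ne_top (b := N * (N * m o)) ?_ ?_
  · exact ENNReal.mul_ne_top (by simp) (ENNReal.mul_ne_top (by simp) (hm o).ne)
  · rw [← h2, ← ENNReal.tsum_mul_left]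
    refine ENNReal.tsum_le_tsum fun x => ?_
    calc m x * (u p o N x * u p o N x) ≤ m x * (N * u p o N x) := by gcongr; exact h1 x
      _ = _ := by ring

lemma D_fin (m : X → ℝ≥0∞) (p : X → X → ℝ≥0∞) (hr : ∀ x, ∑' y, p x y = 1)
    (hc : ∀ y, ∑' x, m x * p x y = 1 * m y) (f g : X → ℝ≥0∞) (hf : B m f f ≠ ⊤)
    (hg : B m g g ≠ ⊤) : D m p f g ≠ ⊤ := by
  have := D_le m p 1 hr hc f g
  refine ne_top_of_le_ne_top (b := 1 * B m f f + 1 * B m g g) (by simp [hf, hg]) (le_trans ?_ this)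
  rw [two_mul]; exact le_self_add

lemma B_amgm (m f g : X → ℝ≥0∞) (s : ℝ≥0∞) (hs : s ≠ 0) (hs' : s ≠ ⊤) :
    2 * B m f g ≤ s * B m f f + s⁻¹ * B m g g := by
  unfold B
  simp_rw [← ENNReal.tsum_mul_left, ← ENNReal.tsum_add]
  refine ENNReal.tsum_le_tsum fun x => ?_
  have hi : s * s⁻¹ = 1 := ENNReal.mul_inv_cancel hs hs'
  calc 2 * (m x * (f x * g x)) = m x * s⁻¹ * (2 * ((s * f x) * g x)) := by
        rw [show m x * s⁻¹ * (2 * ((s * f x) * g x)) = (s * s⁻¹) * (2 * (m x * (f x * g x))) by ring,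
          hi, one_mul]
    _ ≤ m x * s⁻¹ * ((s * f x) * (s * f x) + g x * g x) := by gcongr; exact two_mul_le _ _
    _ = (s * s⁻¹) * (s * (m x * (f x * f x))) + s⁻¹ * (m x * (g x * g x)) := by ring
    _ = _ := by rw [hi, one_mul]

lemma B_ne_top (m f g : X → ℝ≥0∞) (hf : B m f f ≠ ⊤) (hg : B m g g ≠ ⊤) : B m f g ≠ ⊤ := by
  have := B_amgm m f g 1 (by simp) (by simp)
  refine ne_top_of_le_ne_top (b := 1 * B m f f + 1⁻¹ * B m g g) (by simp [hf, hg]) (le_trans ?_ this)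
  rw [two_mul]; exact le_self_add

lemma B_smul (m f g : X → ℝ≥0∞) (t : ℝ≥0∞) : B m f (fun x => t * g x) = t * B m f g := by
  unfold B
  rw [← ENNReal.tsum_mul_left]
  exact tsum_congr fun x => by ring

lemma D_smul (m : X → ℝ≥0∞) (K : X → X → ℝ≥0∞) (f g : X → ℝ≥0∞) (t : ℝ≥0∞) :
    D m K f (fun x => t * g x) = t * D m K f g := by
  unfold D
  simp_rw [← ENNReal.tsum_mul_left]
  exact tsum_congr fun x => tsum_congr fun y => by ring

lemma compare (m : X → ℝ≥0∞) (hm : ∀ x, m x < ⊤) (p p' : X → X → ℝ≥0∞)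
    (hr : ∀ x, ∑' y, p x y = 1) (hr' : ∀ x, ∑' y, p' x y = 1)
    (hc : ∀ y, ∑' x, m x * p x y = m y) (hc' : ∀ y, ∑' x, m x * p' x y = m y)
    (ε : ℝ≥0∞) (hε : ε ≠ ⊤) (hcomp : ∀ x y, ε * p x y ≤ p' x y) (f : X → ℝ≥0∞) :
    D m p' f f + ε * B m f f ≤ B m f f + ε * D m p f f := by
  have hR : ∀ x y, p' x y = ε * p x y + (p' x y - ε * p x y) := fun x y =>
    (add_tsub_cancel_of_le (hcomp x y)).symm
  set R : X → X → ℝ≥0∞ := fun x y => p' x y - ε * p x y with hRdef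
  have h1 : ∀ x, ε + ∑' y, R x y = 1 := by
    intro x
    rw [← hr' x]
    conv_rhs => enter [1, y]; rw [hR x y]
    rw [ENNReal.tsum_add, ENNReal.tsum_mul_left, hr, mul_one]
  have h2 : ∀ y, ε * m y + ∑' x, m x * R x y = m y := by
    intro y
    conv_rhs => rw [← hc' y]
    conv_rhs => enter [1, x]; rw [hR x y, mul_add, mul_left_comm]
    rw [ENNReal.tsum_add, ENNReal.tsum_mul_left, hc]
  have hD : D m p' f f = ε * D m p f f + D m R f f := by
    unfold D
    simp_rw [← ENNReal.tsum_mul_left, ← ENNReal.tsum_add]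
    refine tsum_congr fun x => tsum_congr fun y => ?_
    rw [hR x y]; ring
  rcases isEmpty_or_nonempty X with hX | ⟨⟨x0⟩⟩
  · simp [D, B]
  have hε1 : ε ≤ 1 := by rw [← h1 x0]; exact le_self_add
  have hr2 : ∀ x, ∑' y, R x y = 1 - ε := fun x => by
    rw [← h1 x, ENNReal.add_sub_cancel_left hε]
  have hc2 : ∀ y, ∑' x, m x * R x y = (1 - ε) * m y := fun y => by
    rw [ENNReal.sub_mul (fun _ _ => (hm y).ne), one_mul]
    have hne := ENNReal.mul_ne_top hε (hm y).ne
    calc ∑' x, m x * R x y = ε * m y + ∑' x, m x * R x y - ε * m y :=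
          (ENNReal.add_sub_cancel_left hne).symm
      _ = _ := by rw [h2 y]
  have h3 := D_le m R (1 - ε) hr2 hc2 f f
  rw [← two_mul] at h3
  have h4 : D m R f f ≤ (1 - ε) * B m f f :=
    (ENNReal.mul_le_mul_iff_right (by simp) (by simp)).1 h3
  calc _ ≤ ε * D m p f f + (1 - ε) * B m f f + ε * B m f f := by rw [hD]; gcongr
    _ = ((1 - ε) + ε) * B m f f + ε * D m p f f := by ring
    _ = _ := by rw [tsub_add_cancel_of_le hε1, one_mul]

lemma main_ineq (m : X → ℝ≥0∞) (hm : ∀ x, m x < ⊤) (p p' : X → X → ℝ≥0∞)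
    (hr : ∀ x, ∑' y, p x y = 1) (hr' : ∀ x, ∑' y, p' x y = 1)
    (hc : ∀ y, ∑' x, m x * p x y = m y) (hc' : ∀ y, ∑' x, m x * p' x y = m y)
    (hrev : ∀ x y, m x * p x y = m y * p y x)
    (ε : ℝ≥0∞) (hε0 : ε ≠ 0) (hε : ε ≠ ⊤) (hcomp : ∀ x y, ε * p x y ≤ p' x y) (o : X) (N M : ℕ) :
    m o * u p' o N o ≤ ε⁻¹ * (m o * u p o M o) + 2 * B m (u p' o N) (w p o M) := by
  have hc1 : ∀ y, ∑' x, m x * p x y = 1 * m y := by simpa using hc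
  have hc1' : ∀ y, ∑' x, m x * p' x y = 1 * m y := by simpa using hc'
  have ff := B_fin m hm p' hr' hc' o N
  have uu := B_fin m hm p hr hc o M
  have i1 := B_u m (u p' o N) p' o N
  have i2 := B_u m (u p' o N) p o M
  have i3 := B_u m (u p o M) p o M
  have i4 := compare m hm p p' hr hr' hc hc' ε hε hcomp (u p' o N)
  have i5 := form_nonneg m p hr hc1 hrev (u p' o N) (fun x => ε⁻¹ * u p o M x)
  have r1 : B m (fun x => ε⁻¹ * u p o M x) (fun x => ε⁻¹ * u p o M x) =
      ε⁻¹ * (ε⁻¹ * B m (u p o M) (u p o M)) := by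
    rw [B_smul, B_comm, B_smul]
  have r2 : D m p (fun x => ε⁻¹ * u p o M x) (fun x => ε⁻¹ * u p o M x) =
      ε⁻¹ * (ε⁻¹ * D m p (u p o M) (u p o M)) := by
    rw [D_smul, D_symm m p hrev, D_smul]
  rw [r1, r2, B_smul, D_smul] at i5
  clear r1 r2
  have hww' : B m (u p' o N) (w p' o N) ≠ ⊤ := by
    have h : B m (u p' o N) (u p' o N) + m o * u p' o N o ≠ ⊤ := by
      refine ENNReal.add_ne_top.2 ⟨ff, ENNReal.mul_ne_top (hm o).ne ?_⟩
      exact ENNReal.sum_ne_top.2 fun n _ => ne_top_of_le_ne_top (by simp) (w_le p' hr' o n o)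
    refine ne_top_of_le_ne_top (b := D m p' (u p' o N) (u p' o N) + m o * u p' o N o) ?_ ?_
    · exact ENNReal.add_ne_top.2 ⟨D_fin m p' hr' hc1' _ _ ff ff, (ENNReal.add_ne_top.1 h).2⟩
    · rw [← i1]; exact le_add_self
  have ha : m o * u p' o N o ≠ ⊤ := ENNReal.mul_ne_top (hm o).ne
    (ENNReal.sum_ne_top.2 fun n _ => ne_top_of_le_ne_top (by simp) (w_le p' hr' o n o))
  have hg : m o * u p o M o ≠ ⊤ := ENNReal.mul_ne_top (hm o).ne
    (ENNReal.sum_ne_top.2 fun n _ => ne_top_of_le_ne_top (by simp) (w_le p hr o n o))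
  have d1 := D_fin m p' hr' hc1' _ _ ff ff
  have d2 := D_fin m p hr hc1 _ _ ff ff
  have d3 := D_fin m p hr hc1 _ _ uu uu
  have d4 := D_fin m p hr hc1 _ _ ff uu
  have fu := B_ne_top m _ _ ff uu
  have e1 : B m (u p' o N) (w p o M) ≠ ⊤ := by
    refine ne_top_of_le_ne_top (ENNReal.add_ne_top.2 ⟨d4, ha⟩) ?_
    rw [← i2]; exact le_add_self
  have e2 : B m (u p o M) (w p o M) ≠ ⊤ := by
    refine ne_top_of_le_ne_top (ENNReal.add_ne_top.2 ⟨d3, hg⟩) ?_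
    rw [← i3]; exact le_add_self
  generalize B m (u p' o N) (u p' o N) = Bff at *
  generalize B m (u p o M) (u p o M) = Buu at *
  generalize B m (u p' o N) (u p o M) = Bfu at *
  generalize B m (u p' o N) (w p' o N) = Bfw' at *
  generalize B m (u p' o N) (w p o M) = Bfw at *
  generalize B m (u p o M) (w p o M) = Buw at *
  generalize D m p' (u p' o N) (u p' o N) = D' at *
  generalize D m p (u p' o N) (u p' o N) = Dff at *
  generalize D m p (u p' o N) (u p o M) = Dfu at *
  generalize D m p (u p o M) (u p o M) = Duu at *
  generalize m o * u p' o N o = a at *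
  generalize m o * u p o M o = g at *
  clear hcomp
  lift Bff to NNReal using ff
  lift Buu to NNReal using uu
  lift Bfu to NNReal using fu
  lift Bfw' to NNReal using hww'
  lift Bfw to NNReal using e1
  lift Buw to NNReal using e2
  lift D' to NNReal using d1
  lift Dff to NNReal using d2
  lift Dfu to NNReal using d4
  lift Duu to NNReal using d3
  lift a to NNReal using ha
  lift g to NNReal using hg
  lift ε to NNReal using hε
  have hε0' : ε ≠ 0 := by simpa using hε0
  rw [← ENNReal.coe_inv hε0'] at i5 ⊢
  obtain ⟨t, ht⟩ : ∃ t, t = ε⁻¹ := ⟨_, rfl⟩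
  have ht1 : (ε : ℝ) * t = 1 := by rw [ht]; push_cast; exact mul_inv_cancel₀ (by exact_mod_cast hε0')
  rw [← ht] at i5 ⊢
  norm_cast at i1 i2 i3 i4 i5 ⊢
  rw [← NNReal.coe_le_coe] at i4 i5 ⊢
  rw [← NNReal.coe_inj] at i1 i2 i3
  push_cast at *
  have ep : (0:ℝ) < ε := by positivity
  have tp : (0:ℝ) ≤ t := t.2
  have p1 : (0:ℝ) ≤ Bfw' := Bfw'.2
  have p2 : (0:ℝ) ≤ Buw := Buw.2
  -- multiply i5 by ε
  have j5 := mul_le_mul_of_nonneg_left i5 ep.le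
  have k : ∀ z : ℝ, (ε : ℝ) * (t * z) = z := fun z => by rw [← mul_assoc, ht1, one_mul]
  have j6 : 2 * (ε * (Dff:ℝ)) + 2 * (t * Duu) + 4 * Bfu ≤ 2 * (ε * Bff) + 2 * (t * Buu) + 4 * Dfu := by
    have l1 := k (t * Duu)
    have l2 := k (t * Buu)
    have l3 := k Bfu
    have l4 := k Dfu
    linarith
  have j7 : (t:ℝ) * Buu ≤ t * Duu + t * g := by
    rw [← mul_add]; exact mul_le_mul_of_nonneg_left (by linarith) tp
  linarith

end TC

open Filter Topology in
/-- Comparison criterion for transience (Theorem `thm:r`): if `p` and `p'` are Markov kernels on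
a countable state space with a common stationary measure `m` taking values in `(0,∞)`, `p` is
reversible with respect to `m`, and `p' ≥ ε·p` for some `ε > 0`, then the Green kernel of `p'`
at any point `o` is at most `ε⁻¹` times that of `p`; in particular transience of `p` implies
transience of `p'`. -/
theorem transience_comparison {X : Type*} [Countable X]
    (p p' : X → X → ℝ≥0∞)
    (hp_le : ∀ x y, p x y ≤ 1) (hp'_le : ∀ x y, p' x y ≤ 1)
    (hp_row : ∀ x, ∑' y, p x y = 1) (hp'_row : ∀ x, ∑' y, p' x y = 1)
    (m : X → ℝ≥0∞) (hm_pos : ∀ x, 0 < m x) (hm_fin : ∀ x, m x < ⊤)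
    (hstat : ∀ y, ∑' x, m x * p x y = m y)
    (hstat' : ∀ y, ∑' x, m x * p' x y = m y)
    (hrev : ∀ x y, m x * p x y = m y * p y x)
    (ε : ℝ≥0∞) (hε : 0 < ε) (hε_fin : ε ≠ ⊤)
    (hcomp : ∀ x y, ε * p x y ≤ p' x y)
    (o : X) :
    (∑' n : ℕ, iterKernel p' n o o) ≤ ε⁻¹ * ∑' n : ℕ, iterKernel p n o o ∧
    ((∑' n : ℕ, iterKernel p n o o) < ⊤ → (∑' n : ℕ, iterKernel p' n o o) < ⊤) := by
  have hmain : (∑' n : ℕ, iterKernel p' n o o) ≤ ε⁻¹ * ∑' n : ℕ, iterKernel p n o o := by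
    have hinv : ε⁻¹ ≠ 0 := ENNReal.inv_ne_zero.2 hε_fin
    have hinv' : ε⁻¹ ≠ ⊤ := ENNReal.inv_ne_top.2 hε.ne'
    by_cases hG : (∑' n : ℕ, iterKernel p n o o) = ⊤
    · rw [hG, ENNReal.mul_top hinv]; exact le_top
    rw [ENNReal.tsum_eq_iSup_nat]
    refine iSup_le fun N => ?_
    change TC.u p' o N o ≤ _
    set G := ∑' n : ℕ, iterKernel p n o o with hGdef
    have ff := TC.B_fin m hm_fin p' hp'_row hstat' o N
    set F := TC.B m (TC.u p' o N) (TC.u p' o N) with hF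
    have step : ∀ s : ℝ≥0∞, s ≠ 0 → s ≠ ⊤ →
        m o * TC.u p' o N o ≤ ε⁻¹ * (m o * G) + s * F := by
      intro s hs hs'
      have hb : ∀ M, m o * TC.u p' o N o ≤
          ε⁻¹ * (m o * G) + (s * F + s⁻¹ * (m o * iterKernel p (M + M) o o)) := by
        intro M
        refine (TC.main_ineq m hm_fin p p' hp_row hp'_row hstat hstat' hrev ε hε.ne' hε_fin hcomp
          o N M).trans ?_
        have h1 := TC.B_amgm m (TC.u p' o N) (TC.w p o M) s hs hs'
        rw [TC.B_w m p hrev] at h1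
        have h2 : TC.u p o M o ≤ G := ENNReal.sum_le_tsum _
        gcongr
        exact h1
      have t0 : Tendsto (fun n => iterKernel p n o o) atTop (𝓝 0) :=
        ENNReal.tendsto_atTop_zero_of_tsum_ne_top hG
      have t1 : Tendsto (fun M : ℕ => iterKernel p (M + M) o o) atTop (𝓝 0) :=
        t0.comp (tendsto_atTop_mono (fun n => Nat.le_add_left n n) tendsto_id)
      have t2 := ENNReal.Tendsto.const_mul t1 (Or.inr (hm_fin o).ne)
      have t3 := ENNReal.Tendsto.const_mul t2 (Or.inr (ENNReal.inv_ne_top.2 hs))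
      have t4 := (t3.const_add (s * F)).const_add (ε⁻¹ * (m o * G))
      simp only [mul_zero, add_zero] at t4
      exact ge_of_tendsto' t4 hb
    have fin : m o * TC.u p' o N o ≤ ε⁻¹ * (m o * G) := by
      have t1 : Tendsto (fun n : ℕ => ((n : ℝ≥0∞) + 1)⁻¹) atTop (𝓝 0) := by
        have := (tendsto_add_atTop_iff_nat 1).2 ENNReal.tendsto_inv_nat_nhds_zero
        simpa using this
      have t2 := (ENNReal.Tendsto.mul_const t1 (Or.inr ff)).const_add (ε⁻¹ * (m o * G))
      simp only [zero_mul, add_zero] at t2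
      refine ge_of_tendsto' t2 fun n => step _ ?_ ?_
      · simp
      · simp
    rw [mul_left_comm] at fin
    exact (ENNReal.mul_le_mul_iff_right (hm_pos o).ne' (hm_fin o).ne).1 fin
  refine ⟨hmain, fun h => lt_of_le_of_lt hmain ?_⟩
  exact ENNReal.mul_lt_top (ENNReal.inv_lt_top.2 hε) h
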